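/- arXiv:0905.1489 — 2 statements merged into one kernel-verified Lean document; each statement's English description precedes it below -/
import Mathlib

section
/- Let (C, δ, β) be a mixed complex over κ. For every integer r ≥ 0, the canonical linear map from the direct limit colim_k ^+H^{r+2k}_β (taken over the maps S induced by the inclusions ^+C^*_β ↪ ^+C^{*+2}_β placing a tuple into the lower components) to PH^r, induced by the inclusions ^+C^{r+2k} ⊆ PC^{r+2k} = PC^r, is an isomorphism of κ-vector spaces. -/
open LinearMap DirectSum

namespace CDGA

variable {κ : Type} [Field κ]

/-- Cast along an equality of indices. -/
def fcast {ι : Type} {C : ι → Type} [∀ i, AddCommGroup (C i)] [∀ i, Module κ (C i)]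
    {m n : ι} (h : m = n) : C m →ₗ[κ] C n := by subst h; exact LinearMap.id

section CohomologyDefs

variable {C : ℤ → Type} [∀ n, AddCommGroup (C n)] [∀ n, Module κ (C n)]

/-- Cocycles of a cochain complex. -/
def cocycles (d : ∀ n : ℤ, C n →ₗ[κ] C (n + 1)) (r : ℤ) : Submodule κ (C r) :=
  LinearMap.ker (d r)

/-- Coboundaries of a cochain complex. -/
def cobound (d : ∀ n : ℤ, C n →ₗ[κ] C (n + 1)) (r : ℤ) : Submodule κ (C r) :=
  LinearMap.range ((fcast (show r - 1 + 1 = r by ring)).comp (d (r - 1)))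

/-- Cohomology of a cochain complex in degree `r`. -/
abbrev cohomology (d : ∀ n : ℤ, C n →ₗ[κ] C (n + 1)) (r : ℤ) : Type :=
  ↥(cocycles d r) ⧸ (cobound d r).comap (cocycles d r).subtype

/-- Cycles of a chain complex (degree `-1` differential). -/
def bcycles (d : ∀ n : ℤ, C n →ₗ[κ] C (n - 1)) (r : ℤ) : Submodule κ (C r) :=
  LinearMap.ker (d r)

/-- Boundaries of a chain complex. -/
def bbound (d : ∀ n : ℤ, C n →ₗ[κ] C (n - 1)) (r : ℤ) : Submodule κ (C r) :=
  LinearMap.range ((fcast (show r + 1 - 1 = r by ring)).comp (d (r + 1)))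

/-- Homology of a chain complex in degree `r`. -/
abbrev homologyC (d : ∀ n : ℤ, C n →ₗ[κ] C (n - 1)) (r : ℤ) : Type :=
  ↥(bcycles d r) ⧸ (bbound d r).comap (bcycles d r).subtype

end CohomologyDefs

section InducedMaps

variable {C₁ C₂ : ℤ → Type}
  [∀ n, AddCommGroup (C₁ n)] [∀ n, Module κ (C₁ n)]
  [∀ n, AddCommGroup (C₂ n)] [∀ n, Module κ (C₂ n)]

open Classical in
/-- The map induced on cohomology by a linear map `g` from the degree-`a` part of the first
complex to the degree-`b` part of the second complex.  (If `g` is not compatible with the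
differentials, this is the junk value `0`.) -/
noncomputable def Hmap₂ (d₁ : ∀ n : ℤ, C₁ n →ₗ[κ] C₁ (n + 1)) (d₂ : ∀ n : ℤ, C₂ n →ₗ[κ] C₂ (n + 1))
    (a b : ℤ) (g : C₁ a →ₗ[κ] C₂ b) : cohomology d₁ a →ₗ[κ] cohomology d₂ b :=
  if h : cocycles d₁ a ≤ (cocycles d₂ b).comap g ∧ cobound d₁ a ≤ (cobound d₂ b).comap g then
    Submodule.mapQ _ _ (g.restrict fun x hx => h.1 hx)
      (fun x hx => by
        have hg : g ↑x ∈ cobound d₂ b := h.2 hx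
        simpa [Submodule.mem_comap, LinearMap.restrict_apply] using hg)
  else 0

open Classical in
/-- The map induced on homology by a linear map `g` from the degree-`a` part of the first
chain complex to the degree-`b` part of the second chain complex.  (Junk value `0` if `g` is
not compatible with the differentials.) -/
noncomputable def hMap₂ (d₁ : ∀ n : ℤ, C₁ n →ₗ[κ] C₁ (n - 1)) (d₂ : ∀ n : ℤ, C₂ n →ₗ[κ] C₂ (n - 1))
    (a b : ℤ) (g : C₁ a →ₗ[κ] C₂ b) : homologyC d₁ a →ₗ[κ] homologyC d₂ b :=
  if h : bcycles d₁ a ≤ (bcycles d₂ b).comap g ∧ bbound d₁ a ≤ (bbound d₂ b).comap g then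
    Submodule.mapQ _ _ (g.restrict fun x hx => h.1 hx)
      (fun x hx => by
        have hg : g ↑x ∈ bbound d₂ b := h.2 hx
        simpa [Submodule.mem_comap, LinearMap.restrict_apply] using hg)
  else 0

end InducedMaps

/-- A mixed complex over `κ`: non-negatively graded vector spaces with a degree `+1`
exterior differential `δ` and a degree `-1` interior differential `β` satisfying
`δδ = 0`, `ββ = 0` and `βδ + δβ = 0`. -/
structure Mixed (κ : Type) [Field κ] : Type 1 where
  C : ℤ → Type
  [acg : ∀ n, AddCommGroup (C n)]
  [mod : ∀ n, Module κ (C n)]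
  trivNeg : ∀ n : ℤ, n < 0 → Subsingleton (C n)
  δ : ∀ n : ℤ, C n →ₗ[κ] C (n + 1)
  β : ∀ n : ℤ, C n →ₗ[κ] C (n - 1)
  δδ : ∀ (n : ℤ) (x : C n), δ (n + 1) (δ n x) = 0
  ββ : ∀ (n : ℤ) (x : C n), β (n - 1) (β n x) = 0
  βδ : ∀ (n : ℤ) (x : C n),
    fcast (κ := κ) (show n + 1 - 1 = n by ring) (β (n + 1) (δ n x))
      + fcast (κ := κ) (show n - 1 + 1 = n by ring) (δ (n - 1) (β n x)) = 0

attribute [instance] Mixed.acg Mixed.mod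

/-- `^+C^r := ∏_{k ≥ 0} C^{r-2k}`. -/
abbrev plusC (M : Mixed κ) (r : ℤ) : Type := ∀ k : ℕ, M.C (r - 2 * (k : ℤ))

/-- `^-C^r := ∏_{k ≥ 0} C^{r+2k}`. -/
abbrev minusC (M : Mixed κ) (r : ℤ) : Type := ∀ k : ℕ, M.C (r + 2 * (k : ℤ))

/-- `𝕡C^r := ∏_{m ≡ r mod 2} C^m` (the components with `m < 0` are trivial). -/
abbrev pprodC (M : Mixed κ) (r : ℤ) : Type := ∀ n : {m : ℤ // m % 2 = r % 2}, M.C n.1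

/-- `PC^r := ⊕_{m ≡ r mod 2} C^m` (the components with `m < 0` are trivial). -/
abbrev pC (M : Mixed κ) (r : ℤ) : Type := ⨁ n : {m : ℤ // m % 2 = r % 2}, M.C n.1

/-- Components of the differential `^+D_β`. -/
def plusDComp (M : Mixed κ) (r : ℤ) : ∀ k : ℕ, plusC M r →ₗ[κ] M.C (r + 1 - 2 * (k : ℤ))
  | 0 =>
      (fcast (show r - 2 * ((0:ℕ) : ℤ) + 1 = r + 1 - 2 * ((0:ℕ) : ℤ) by push_cast; ring)).comp
        ((M.δ (r - 2 * ((0:ℕ) : ℤ))).comp (LinearMap.proj 0))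
  | (k + 1) =>
      (fcast (show r - 2 * ((k + 1 : ℕ) : ℤ) + 1 = r + 1 - 2 * ((k + 1 : ℕ) : ℤ) by push_cast; ring)).comp
        ((M.δ (r - 2 * ((k + 1 : ℕ) : ℤ))).comp (LinearMap.proj (k + 1)))
      + (fcast (show r - 2 * ((k : ℕ) : ℤ) - 1 = r + 1 - 2 * ((k + 1 : ℕ) : ℤ) by push_cast; ring)).comp
        ((M.β (r - 2 * ((k : ℕ) : ℤ))).comp (LinearMap.proj k))

/-- The differential of the cochain complex `^+C_β`. -/
def plusD (M : Mixed κ) (r : ℤ) : plusC M r →ₗ[κ] plusC M (r + 1) :=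
  LinearMap.pi (plusDComp M r)

/-- The differential of the chain complex `(^+C, ^+D^δ)`. -/
def plusDelta (M : Mixed κ) (r : ℤ) : plusC M r →ₗ[κ] plusC M (r - 1) :=
  LinearMap.pi fun k : ℕ =>
    (fcast (show r - 2 * ((k : ℕ) : ℤ) - 1 = r - 1 - 2 * ((k : ℕ) : ℤ) by ring)).comp
      ((M.β (r - 2 * ((k : ℕ) : ℤ))).comp (LinearMap.proj k))
    + (fcast (show r - 2 * ((k + 1 : ℕ) : ℤ) + 1 = r - 1 - 2 * ((k : ℕ) : ℤ) by push_cast; ring)).comp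
      ((M.δ (r - 2 * ((k + 1 : ℕ) : ℤ))).comp (LinearMap.proj (k + 1)))

/-- The differential of the cochain complex `^-C_β`. -/
def minusD (M : Mixed κ) (r : ℤ) : minusC M r →ₗ[κ] minusC M (r + 1) :=
  LinearMap.pi fun k : ℕ =>
    (fcast (show r + 2 * ((k + 1 : ℕ) : ℤ) - 1 = r + 1 + 2 * ((k : ℕ) : ℤ) by push_cast; ring)).comp
      ((M.β (r + 2 * ((k + 1 : ℕ) : ℤ))).comp (LinearMap.proj (k + 1)))
    + (fcast (show r + 2 * ((k : ℕ) : ℤ) + 1 = r + 1 + 2 * ((k : ℕ) : ℤ) by ring)).comp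
      ((M.δ (r + 2 * ((k : ℕ) : ℤ))).comp (LinearMap.proj k))

/-- The differential of the `2`-periodic cochain complex `𝕡C`. -/
def pprodD (M : Mixed κ) (r : ℤ) : pprodC M r →ₗ[κ] pprodC M (r + 1) :=
  LinearMap.pi fun n : {m : ℤ // m % 2 = (r + 1) % 2} =>
    (fcast (show n.1 - 1 + 1 = n.1 by ring)).comp
      ((M.δ (n.1 - 1)).comp
        (LinearMap.proj (⟨n.1 - 1, by have := n.2; omega⟩ : {m : ℤ // m % 2 = r % 2})))
    + (fcast (show n.1 + 1 - 1 = n.1 by ring)).comp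
      ((M.β (n.1 + 1)).comp
        (LinearMap.proj (⟨n.1 + 1, by have := n.2; omega⟩ : {m : ℤ // m % 2 = r % 2})))

/-- The differential of the `2`-periodic cochain complex `PC` (direct sum version). -/
noncomputable def pD (M : Mixed κ) (r : ℤ) : pC M r →ₗ[κ] pC M (r + 1) :=
  DirectSum.toModule κ {m : ℤ // m % 2 = r % 2} (pC M (r + 1)) fun n =>
    ((DirectSum.lof κ {m : ℤ // m % 2 = (r + 1) % 2} (fun m => M.C m.1)
        ⟨n.1 + 1, by have := n.2; omega⟩).comp (M.δ n.1))
    + ((DirectSum.lof κ {m : ℤ // m % 2 = (r + 1) % 2} (fun m => M.C m.1)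
        ⟨n.1 - 1, by have := n.2; omega⟩).comp (M.β n.1))

end CDGA

namespace CDGA

variable {κ : Type} [Field κ]

section MorphismInduced

variable {M₁ M₂ : Mixed κ}

/-- The map induced by a morphism of mixed complexes on `^+C`. -/
def plusMap (f : ∀ n : ℤ, M₁.C n →ₗ[κ] M₂.C n) (r : ℤ) : plusC M₁ r →ₗ[κ] plusC M₂ r :=
  LinearMap.pi fun k : ℕ => (f (r - 2 * (k : ℤ))).comp (LinearMap.proj k)

/-- The map induced by a morphism of mixed complexes on `^-C`. -/
def minusMap (f : ∀ n : ℤ, M₁.C n →ₗ[κ] M₂.C n) (r : ℤ) : minusC M₁ r →ₗ[κ] minusC M₂ r :=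
  LinearMap.pi fun k : ℕ => (f (r + 2 * (k : ℤ))).comp (LinearMap.proj k)

/-- The map induced by a morphism of mixed complexes on `𝕡C`. -/
def pprodMap (f : ∀ n : ℤ, M₁.C n →ₗ[κ] M₂.C n) (r : ℤ) : pprodC M₁ r →ₗ[κ] pprodC M₂ r :=
  LinearMap.pi fun n : {m : ℤ // m % 2 = r % 2} => (f n.1).comp (LinearMap.proj n)

/-- The map induced by a morphism of mixed complexes on `PC`. -/
noncomputable def pMap (f : ∀ n : ℤ, M₁.C n →ₗ[κ] M₂.C n) (r : ℤ) : pC M₁ r →ₗ[κ] pC M₂ r :=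
  DirectSum.toModule κ {m : ℤ // m % 2 = r % 2} (pC M₂ r) fun n =>
    (DirectSum.lof κ {m : ℤ // m % 2 = r % 2} (fun m => M₂.C m.1) n).comp (f n.1)

end MorphismInduced

/-- Components of the canonical inclusion `^+C^a → ^+C^{a+2} = ^+C^b`,
`(ω_a, ω_{a-2}, …) ↦ (0, ω_a, ω_{a-2}, …)`. -/
def inclS2Comp (M : Mixed κ) (a b : ℤ) (h : a + 2 = b) :
    ∀ k : ℕ, plusC M a →ₗ[κ] M.C (b - 2 * (k : ℤ))
  | 0 => 0
  | (j + 1) =>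
      (fcast (show a - 2 * ((j : ℕ) : ℤ) = b - 2 * ((j + 1 : ℕ) : ℤ) by push_cast; omega)).comp
        (LinearMap.proj j)

/-- The canonical inclusion `i : ^+C^a → ^+C^b` (for `b = a + 2`). -/
def inclS2 (M : Mixed κ) (a b : ℤ) (h : a + 2 = b) : plusC M a →ₗ[κ] plusC M b :=
  LinearMap.pi (inclS2Comp M a b h)

/-- The projection `π : ^+C^r → C^r` onto the top component. -/
def topProj (M : Mixed κ) (r : ℤ) : plusC M r →ₗ[κ] M.C r :=
  (fcast (show r - 2 * ((0:ℕ) : ℤ) = r by push_cast; ring)).comp (LinearMap.proj 0)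

/-- The canonical projection `^+C^a → ^+C^{a-2} = ^+C^b` dropping the top component. -/
def projS2 (M : Mixed κ) (a b : ℤ) (h : b + 2 = a) : plusC M a →ₗ[κ] plusC M b :=
  LinearMap.pi fun k : ℕ =>
    (fcast (show a - 2 * ((k + 1 : ℕ) : ℤ) = b - 2 * ((k : ℕ) : ℤ) by push_cast; omega)).comp
      (LinearMap.proj (k + 1))

/-- The canonical inclusion `I : ^+C^{r-2} → 𝕡C^r` (placing the component of
degree `r - 2 - 2j` in degree `r - 2 - 2j`). -/
def inclPprod (M : Mixed κ) (r : ℤ) : plusC M (r - 2) →ₗ[κ] pprodC M r :=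
  LinearMap.pi fun n : {m : ℤ // m % 2 = r % 2} =>
    if h : n.1 ≤ r - 2 then
      (fcast (show r - 2 - 2 * ((((r - 2 - n.1) / 2).toNat : ℕ) : ℤ) = n.1 by
          have := n.2; omega)).comp
        (LinearMap.proj (((r - 2 - n.1) / 2).toNat))
    else 0

/-- The canonical projection `p : 𝕡C^r → ^-C^r` onto the components of degree `≥ r`. -/
def projMinus (M : Mixed κ) (r : ℤ) : pprodC M r →ₗ[κ] minusC M r :=
  LinearMap.pi fun j : ℕ =>
    LinearMap.proj (⟨r + 2 * (j : ℤ), by omega⟩ : {m : ℤ // m % 2 = r % 2})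

/-- Reindexing (periodicity) isomorphism between the `2`-periodic complexes `PC^a` and
`PC^b` for `a ≡ b mod 2`. -/
noncomputable def reindexP (M : Mixed κ) (a b : ℤ) (h : a % 2 = b % 2) :
    pC M a →ₗ[κ] pC M b :=
  DirectSum.toModule κ {m : ℤ // m % 2 = a % 2} (pC M b) fun n =>
    DirectSum.lof κ {m : ℤ // m % 2 = b % 2} (fun m => M.C m.1) ⟨n.1, by have := n.2; omega⟩

/-- The canonical map `^+C^m → PC^m` (the components of negative degree are trivial and
are sent to `0`). -/
noncomputable def inclPlusP (M : Mixed κ) (m : ℤ) : plusC M m →ₗ[κ] pC M m :=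
  ∑ j ∈ Finset.range (m.toNat + 1),
    (DirectSum.lof κ {x : ℤ // x % 2 = m % 2} (fun x => M.C x.1)
        ⟨m - 2 * (j : ℤ), by omega⟩).comp
      (LinearMap.proj j)

section Psi

variable (M : Mixed κ) (Ψ : ℤ → ∀ n : ℤ, M.C n →ₗ[κ] M.C n)

/-- The endomorphism `^+Ψ_k` of `^+C^r`: the component of degree `r - 2j` is scaled
by `k^{-j}`. -/
noncomputable def plusPsi (k : ℤ) (r : ℤ) : plusC M r →ₗ[κ] plusC M r :=
  LinearMap.pi fun j : ℕ =>
    (((k : κ)⁻¹) ^ (j : ℕ)) • ((Ψ k (r - 2 * (j : ℤ))).comp (LinearMap.proj j))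

/-- The endomorphism `^-Ψ_k` of `^-C^r`: the component of degree `r + 2j` is scaled
by `k^j`. -/
noncomputable def minusPsi (k : ℤ) (r : ℤ) : minusC M r →ₗ[κ] minusC M r :=
  LinearMap.pi fun j : ℕ =>
    ((k : κ) ^ (j : ℕ)) • ((Ψ k (r + 2 * (j : ℤ))).comp (LinearMap.proj j))

/-- The endomorphism `𝕡Ψ_k` of `𝕡C^r`: the component of degree `r + 2j` (`j ∈ ℤ`) is
scaled by `k^j`. -/
noncomputable def pprodPsi (k : ℤ) (r : ℤ) : pprodC M r →ₗ[κ] pprodC M r :=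
  LinearMap.pi fun n : {m : ℤ // m % 2 = r % 2} =>
    ((k : κ) ^ ((n.1 - r) / 2)) • ((Ψ k n.1).comp (LinearMap.proj n))

end Psi

/-- The map `Φ((a_k)_k) = (a_k - S_k(a_{k+1}))_k` associated to an inverse system
of vector spaces; its kernel is `lim` and its cokernel is `lim¹`. -/
def phiMap {A : ℕ → Type} [∀ i, AddCommGroup (A i)] [∀ i, Module κ (A i)]
    (S : ∀ i : ℕ, A (i + 1) →ₗ[κ] A i) : (∀ i, A i) →ₗ[κ] (∀ i, A i) :=
  LinearMap.pi fun i : ℕ => LinearMap.proj i - (S i).comp (LinearMap.proj (i + 1))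

end CDGA

namespace CDGA

variable {κ : Type} [Field κ]

/-- The map `S : ^+H^{r+2k}_β → ^+H^{r+2(k+1)}_β` induced by the canonical inclusion
`^+C^{r+2k} ↪ ^+C^{r+2k+2}` placing a tuple into the lower components. -/
noncomputable def Smap (M : Mixed κ) (r : ℤ) (k : ℕ) :
    cohomology (plusD M) (r + 2 * (k : ℤ)) →ₗ[κ]
      cohomology (plusD M) (r + 2 * ((k + 1 : ℕ) : ℤ)) :=
  Hmap₂ (plusD M) (plusD M) (r + 2 * (k : ℤ)) (r + 2 * ((k + 1 : ℕ) : ℤ))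
    (inclS2 M (r + 2 * (k : ℤ)) (r + 2 * ((k + 1 : ℕ) : ℤ)) (by push_cast; ring))

/-- The canonical map `^+H^{r+2k}_β → PH^{r+2k} = PH^r` induced by the inclusion
`^+C^{r+2k} ⊆ PC^{r+2k} = PC^r`. -/
noncomputable def phiPH (M : Mixed κ) (r : ℤ) (k : ℕ) :
    cohomology (plusD M) (r + 2 * (k : ℤ)) →ₗ[κ] cohomology (pD M) r :=
  Hmap₂ (plusD M) (pD M) (r + 2 * (k : ℤ)) r
    ((reindexP M (r + 2 * (k : ℤ)) r (by omega)).comp (inclPlusP M (r + 2 * (k : ℤ))))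

/-- The canonical map `⊕_k ^+H^{r+2k}_β → PH^r`; the direct limit
`colim_k ^+H^{r+2k}_β` is the quotient of the source by the relations
`ι_k x - ι_{k+1} (S x)`, so the statement that the induced map on the direct limit is an
isomorphism says exactly that this map is surjective with kernel spanned by these
relations. -/
noncomputable def sigmaPH (M : Mixed κ) (r : ℤ) :
    (⨁ k : ℕ, cohomology (plusD M) (r + 2 * (k : ℤ))) →ₗ[κ] cohomology (pD M) r :=
  DirectSum.toModule κ ℕ (cohomology (pD M) r) (phiPH M r)

section Ambient

variable (M : Mixed κ)

/-- The ambient space: direct sum of all components. -/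
abbrev Amb : Type := ⨁ n : ℤ, M.C n

/-- The total differential on the ambient space. -/
noncomputable def ambD : Amb M →ₗ[κ] Amb M :=
  DirectSum.toModule κ ℤ (Amb M) fun n =>
    (DirectSum.lof κ ℤ M.C (n + 1)).comp (M.δ n) + (DirectSum.lof κ ℤ M.C (n - 1)).comp (M.β n)

theorem ambD_lof (n : ℤ) (x : M.C n) :
    ambD M (DirectSum.lof κ ℤ M.C n x) =
      DirectSum.lof κ ℤ M.C (n + 1) (M.δ n x) + DirectSum.lof κ ℤ M.C (n - 1) (M.β n x) := by
  unfold ambD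
  rw [DirectSum.toModule_lof]
  rfl

theorem lof_fcast {m n : ℤ} (h : m = n) (x : M.C m) :
    DirectSum.lof κ ℤ M.C n (fcast (κ := κ) h x) = DirectSum.lof κ ℤ M.C m x := by
  subst h; rfl

/-- Embedding of `PC^r` in the ambient space. -/
noncomputable def ambK (r : ℤ) : pC M r →ₗ[κ] Amb M :=
  DirectSum.toModule κ {m : ℤ // m % 2 = r % 2} (Amb M) fun n => DirectSum.lof κ ℤ M.C n.1

theorem ambK_lof (r : ℤ) (n : {m : ℤ // m % 2 = r % 2}) (x : M.C n.1) :
    ambK M r (DirectSum.lof κ {m : ℤ // m % 2 = r % 2} (fun m => M.C m.1) n x) =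
      DirectSum.lof κ ℤ M.C n.1 x := by
  unfold ambK
  rw [DirectSum.toModule_lof]

theorem ambK_apply (r : ℤ) (b : pC M r) (n : {m : ℤ // m % 2 = r % 2}) :
    (ambK M r b) n.1 = b n := by
  induction b using DirectSum.induction_on with
  | zero => simp
  | of i x =>
    have h := ambK_lof M r i x
    rw [DirectSum.lof_eq_of, DirectSum.lof_eq_of] at h
    rw [h]
    by_cases hin : i = n
    · subst hin
      rw [DirectSum.of_eq_same, DirectSum.of_eq_same]
    · rw [DirectSum.of_eq_of_ne _ _ _ (fun h => hin (Subtype.ext h.symm)),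
        DirectSum.of_eq_of_ne _ _ _ (fun h => hin h.symm)]
  | add x y hx hy => rw [map_add, DirectSum.add_apply, DirectSum.add_apply, hx, hy]

theorem ambK_inj (r : ℤ) : Function.Injective (ambK M r) := by
  intro a b h
  refine DFinsupp.ext fun n => ?_
  have h1 := ambK_apply M r a n
  have h2 := ambK_apply M r b n
  rw [h] at h1
  exact h1.symm.trans h2

theorem ambK_pD (r : ℤ) (b : pC M r) : ambK M (r + 1) (pD M r b) = ambD M (ambK M r b) := by
  have : (ambK M (r + 1)).comp (pD M r) = (ambD M).comp (ambK M r) := by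
    refine DirectSum.linearMap_ext κ fun n => LinearMap.ext fun x => ?_
    simp only [LinearMap.comp_apply]
    rw [ambK_lof, ambD_lof]
    unfold pD
    rw [DirectSum.toModule_lof]
    simp only [LinearMap.add_apply, LinearMap.comp_apply, map_add]
    rw [ambK_lof, ambK_lof]
  exact LinearMap.congr_fun this b

theorem ambK_fcast {a b : ℤ} (h : a = b) (x : pC M a) :
    ambK M b (fcast (κ := κ) (C := pC M) h x) = ambK M a x := by
  subst h; rfl

/-- Embedding of `^+C^m` in the ambient space. -/
noncomputable def ambJ (m : ℤ) : plusC M m →ₗ[κ] Amb M :=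
  ∑ j ∈ Finset.range (m.toNat + 1),
    (DirectSum.lof κ ℤ M.C (m - 2 * (j : ℤ))).comp (LinearMap.proj j)

theorem lof_neg (n : ℤ) (h : n < 0) (x : M.C n) : DirectSum.lof κ ℤ M.C n x = 0 := by
  have := M.trivNeg n h
  rw [Subsingleton.elim x 0, map_zero]

theorem ambJ_eq (m : ℤ) (x : plusC M m) (N : ℕ) (hN : m.toNat + 1 ≤ N) :
    ambJ M m x = ∑ j ∈ Finset.range N, DirectSum.lof κ ℤ M.C (m - 2 * (j : ℤ)) (x j) := by
  unfold ambJ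
  rw [LinearMap.sum_apply]
  simp only [LinearMap.comp_apply, LinearMap.proj_apply]
  refine Finset.sum_subset (fun i hi => ?_) fun i _ hi => ?_
  · rw [Finset.mem_range] at *; omega
  · rw [Finset.mem_range] at hi
    exact lof_neg M _ (by omega) _

theorem ambJ_apply (m : ℤ) (x : plusC M m) (k : ℕ) :
    (ambJ M m x) (m - 2 * (k : ℤ)) = x k := by
  rw [ambJ_eq M m x (m.toNat + 1 + k + 1) (by omega), DFinsupp.finsetSum_apply,
    Finset.sum_eq_single k]
  · exact DirectSum.of_eq_same _ _
  · intro j _ hj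
    exact DirectSum.of_eq_of_ne _ _ _ (by omega)
  · intro h
    exact absurd (Finset.mem_range.2 (by omega)) h

theorem ambJ_inj (m : ℤ) : Function.Injective (ambJ M m) := by
  intro a b h
  funext k
  have h1 := ambJ_apply M m a k
  have h2 := ambJ_apply M m b k
  rw [h] at h1
  exact h1.symm.trans h2

theorem ambJ_fcast {a b : ℤ} (h : a = b) (x : plusC M a) :
    ambJ M b (fcast (κ := κ) (C := plusC M) h x) = ambJ M a x := by
  subst h; rfl

theorem ambJ_single (m : ℤ) (j : ℕ) (v : M.C (m - 2 * (j : ℤ))) :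
    ambJ M m (Pi.single j v) = DirectSum.lof κ ℤ M.C (m - 2 * (j : ℤ)) v := by
  rw [ambJ_eq M m _ (m.toNat + 1 + j + 1) (by omega), Finset.sum_eq_single j]
  · rw [Pi.single_eq_same]
  · intro i _ hi
    rw [Pi.single_eq_of_ne hi, map_zero]
  · intro h
    exact absurd (Finset.mem_range.2 (by omega)) h

theorem ambJ_plusD (m : ℤ) (x : plusC M m) :
    ambJ M (m + 1) (plusD M m x) = ambD M (ambJ M m x) := by
  obtain ⟨N, hN⟩ : ∃ N : ℕ, N = m.toNat + 2 := ⟨_, rfl⟩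
  rw [ambJ_eq M m x N (by omega), ambJ_eq M (m + 1) _ (N + 1) (by omega), map_sum]
  simp only [ambD_lof]
  rw [Finset.sum_add_distrib]
  have hδ : ∑ j ∈ Finset.range N,
      DirectSum.lof κ ℤ M.C (m - 2 * (j : ℤ) + 1) (M.δ (m - 2 * (j : ℤ)) (x j)) =
      ∑ j ∈ Finset.range (N + 1),
      DirectSum.lof κ ℤ M.C (m - 2 * (j : ℤ) + 1) (M.δ (m - 2 * (j : ℤ)) (x j)) := by
    rw [Finset.sum_range_succ, lof_neg M (m - 2 * (N : ℤ) + 1) (by omega), add_zero]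
  rw [hδ, Finset.sum_range_succ', Finset.sum_range_succ']
  have h0 : plusD M m x 0 = fcast (κ := κ)
      (show m - 2 * ((0:ℕ) : ℤ) + 1 = m + 1 - 2 * ((0:ℕ) : ℤ) by push_cast; ring)
        (M.δ (m - 2 * ((0:ℕ) : ℤ)) (x 0)) := rfl
  have hs : ∀ k : ℕ, plusD M m x (k + 1) = fcast (κ := κ)
      (show m - 2 * ((k + 1 : ℕ) : ℤ) + 1 = m + 1 - 2 * ((k + 1 : ℕ) : ℤ) by push_cast; ring)
        (M.δ (m - 2 * ((k + 1 : ℕ) : ℤ)) (x (k + 1))) + fcast (κ := κ)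
      (show m - 2 * ((k : ℕ) : ℤ) - 1 = m + 1 - 2 * ((k + 1 : ℕ) : ℤ) by push_cast; ring)
        (M.β (m - 2 * ((k : ℕ) : ℤ)) (x k)) := fun k => rfl
  rw [h0, lof_fcast]
  simp only [hs, map_add, lof_fcast]
  rw [Finset.sum_add_distrib]
  abel

theorem ambJ_inclS2 (a b : ℤ) (h : a + 2 = b) (x : plusC M a) :
    ambJ M b (inclS2 M a b h x) = ambJ M a x := by
  obtain ⟨N, hN⟩ : ∃ N : ℕ, N = a.toNat + 3 := ⟨_, rfl⟩
  rw [ambJ_eq M a x N (by omega), ambJ_eq M b _ (N + 1) (by omega), Finset.sum_range_succ']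
  have h0 : inclS2 M a b h x 0 = 0 := rfl
  have hs : ∀ j : ℕ, inclS2 M a b h x (j + 1) = fcast (κ := κ)
      (show a - 2 * ((j : ℕ) : ℤ) = b - 2 * ((j + 1 : ℕ) : ℤ) by push_cast; omega) (x j) :=
    fun j => rfl
  rw [h0, map_zero, add_zero]
  simp only [hs, lof_fcast]

theorem ambK_incl (a b : ℤ) (h : a % 2 = b % 2) (x : plusC M a) :
    ambK M b ((reindexP M a b h).comp (inclPlusP M a) x) = ambJ M a x := by
  rw [ambJ_eq M a x _ le_rfl, LinearMap.comp_apply]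
  unfold inclPlusP
  rw [LinearMap.sum_apply, map_sum, map_sum]
  refine Finset.sum_congr rfl fun j _ => ?_
  unfold reindexP
  rw [LinearMap.comp_apply, DirectSum.toModule_lof, ambK_lof]
  rfl

theorem exists_ambJ (r : ℤ) (b : pC M r) :
    ∃ k₀ : ℤ, ∀ m : ℤ, k₀ ≤ m → m % 2 = r % 2 → ∃ x : plusC M m, ambJ M m x = ambK M r b := by
  induction b using DirectSum.induction_on with
  | zero => exact ⟨0, fun m _ _ => ⟨0, by simp⟩⟩
  | of i v =>
    refine ⟨i.1, fun m hm hr => ?_⟩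
    have h := ambK_lof M r i v
    rw [DirectSum.lof_eq_of κ {m : ℤ // m % 2 = r % 2}] at h
    rw [h]
    have hi := i.2
    have hj : i.1 = m - 2 * ((((m - i.1) / 2).toNat : ℕ) : ℤ) := by omega
    exact ⟨Pi.single _ (fcast (κ := κ) hj v), by rw [ambJ_single, lof_fcast]⟩
  | add x y hx hy =>
    obtain ⟨k, hk⟩ := hx
    obtain ⟨l, hl⟩ := hy
    refine ⟨max k l, fun m hm hr => ?_⟩
    obtain ⟨u, hu⟩ := hk m (le_trans (le_max_left _ _) hm) hr
    obtain ⟨v, hv⟩ := hl m (le_trans (le_max_right _ _) hm) hr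
    exact ⟨u + v, by rw [map_add, map_add, hu, hv]⟩

theorem mem_cocycles_plus (m : ℤ) (x : plusC M m) :
    x ∈ cocycles (plusD M) m ↔ ambD M (ambJ M m x) = 0 := by
  unfold cocycles
  rw [LinearMap.mem_ker, ← ambJ_plusD, map_eq_zero_iff _ (ambJ_inj M (m + 1))]

theorem mem_cocycles_p (m : ℤ) (x : pC M m) :
    x ∈ cocycles (pD M) m ↔ ambD M (ambK M m x) = 0 := by
  unfold cocycles
  rw [LinearMap.mem_ker, ← ambK_pD, map_eq_zero_iff _ (ambK_inj M (m + 1))]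

theorem mem_cobound_plus (m : ℤ) (x : plusC M m) :
    x ∈ cobound (plusD M) m ↔ ∃ y : plusC M (m - 1), ambD M (ambJ M (m - 1) y) = ambJ M m x := by
  unfold cobound
  rw [LinearMap.mem_range]
  refine exists_congr fun y => ?_
  rw [← ambJ_plusD, LinearMap.comp_apply, ← (ambJ_inj M m).eq_iff, ambJ_fcast]

theorem mem_cobound_p (m : ℤ) (x : pC M m) :
    x ∈ cobound (pD M) m ↔ ∃ y : pC M (m - 1), ambD M (ambK M (m - 1) y) = ambK M m x := by
  unfold cobound
  rw [LinearMap.mem_range]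
  refine exists_congr fun y => ?_
  rw [← ambK_pD, LinearMap.comp_apply, ← (ambK_inj M m).eq_iff, ambK_fcast]

end Ambient

theorem Hmap₂_mk {C₁ C₂ : ℤ → Type}
    [∀ n, AddCommGroup (C₁ n)] [∀ n, Module κ (C₁ n)]
    [∀ n, AddCommGroup (C₂ n)] [∀ n, Module κ (C₂ n)]
    (d₁ : ∀ n : ℤ, C₁ n →ₗ[κ] C₁ (n + 1)) (d₂ : ∀ n : ℤ, C₂ n →ₗ[κ] C₂ (n + 1))
    (a b : ℤ) (g : C₁ a →ₗ[κ] C₂ b)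
    (h : cocycles d₁ a ≤ (cocycles d₂ b).comap g ∧ cobound d₁ a ≤ (cobound d₂ b).comap g)
    (x : cocycles d₁ a) :
    Hmap₂ d₁ d₂ a b g (Submodule.Quotient.mk x) =
      Submodule.Quotient.mk (⟨g x.1, h.1 x.2⟩ : cocycles d₂ b) := by
  unfold Hmap₂
  rw [dif_pos h]
  rfl

theorem cohomology_mk_eq {C : ℤ → Type} [∀ n, AddCommGroup (C n)] [∀ n, Module κ (C n)]
    (d : ∀ n : ℤ, C n →ₗ[κ] C (n + 1)) (r : ℤ) (x : cocycles d r) :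
    (Submodule.Quotient.mk x : cohomology d r) = 0 ↔ x.1 ∈ cobound d r := by
  rw [Submodule.Quotient.mk_eq_zero]
  rfl

section Main

variable (M : Mixed κ) (r : ℤ)

theorem Smap_ok (a b : ℤ) (h : a + 2 = b) :
    cocycles (plusD M) a ≤ (cocycles (plusD M) b).comap (inclS2 M a b h) ∧
      cobound (plusD M) a ≤ (cobound (plusD M) b).comap (inclS2 M a b h) := by
  refine ⟨fun x hx => ?_, fun x hx => ?_⟩
  · rw [Submodule.mem_comap, mem_cocycles_plus, ambJ_inclS2]
    exact (mem_cocycles_plus M a x).1 hx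
  · rw [Submodule.mem_comap, mem_cobound_plus, ambJ_inclS2]
    obtain ⟨y, hy⟩ := (mem_cobound_plus M a x).1 hx
    exact ⟨inclS2 M (a - 1) (b - 1) (by omega) y, by rw [ambJ_inclS2, hy]⟩

theorem phi_ok (a b : ℤ) (h : a % 2 = b % 2) :
    cocycles (plusD M) a ≤ (cocycles (pD M) b).comap ((reindexP M a b h).comp (inclPlusP M a)) ∧
      cobound (plusD M) a ≤
        (cobound (pD M) b).comap ((reindexP M a b h).comp (inclPlusP M a)) := by
  refine ⟨fun x hx => ?_, fun x hx => ?_⟩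
  · rw [Submodule.mem_comap, mem_cocycles_p, ambK_incl]
    exact (mem_cocycles_plus M a x).1 hx
  · rw [Submodule.mem_comap, mem_cobound_p, ambK_incl]
    obtain ⟨y, hy⟩ := (mem_cobound_plus M a x).1 hx
    exact ⟨(reindexP M (a - 1) (b - 1) (by omega)).comp (inclPlusP M (a - 1)) y,
      by rw [ambK_incl, hy]⟩

theorem Smap_mk (k : ℕ) (x : cocycles (plusD M) (r + 2 * (k : ℤ))) :
    ∃ y : cocycles (plusD M) (r + 2 * ((k + 1 : ℕ) : ℤ)),
      Smap M r k (Submodule.Quotient.mk x) = Submodule.Quotient.mk y ∧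
      ambJ M _ y.1 = ambJ M _ x.1 :=
  ⟨_, Hmap₂_mk _ _ _ _ _ (Smap_ok M _ _ (by push_cast; ring)) x, ambJ_inclS2 M _ _ _ _⟩

theorem phiPH_mk (k : ℕ) (x : cocycles (plusD M) (r + 2 * (k : ℤ))) :
    ∃ y : cocycles (pD M) r,
      phiPH M r k (Submodule.Quotient.mk x) = Submodule.Quotient.mk y ∧
      ambK M _ y.1 = ambJ M _ x.1 :=
  ⟨_, Hmap₂_mk _ _ _ _ _ (phi_ok M _ _ (by omega)) x, ambK_incl M _ _ _ _⟩

theorem phiPH_Smap (k : ℕ) (x : cohomology (plusD M) (r + 2 * (k : ℤ))) :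
    phiPH M r (k + 1) (Smap M r k x) = phiPH M r k x := by
  obtain ⟨x, rfl⟩ := Submodule.Quotient.mk_surjective _ x
  obtain ⟨y, hy, hy'⟩ := Smap_mk M r k x
  obtain ⟨z, hz, hz'⟩ := phiPH_mk M r k x
  obtain ⟨w, hw, hw'⟩ := phiPH_mk M r (k + 1) y
  rw [hy, hz, hw]
  congr 1
  exact Subtype.ext (ambK_inj M r (by rw [hw', hy', hz']))

/-- The submodule of relations. -/
def relS : Submodule κ (⨁ k : ℕ, cohomology (plusD M) (r + 2 * (k : ℤ))) :=
  Submodule.span κ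
        {y : ⨁ k : ℕ, cohomology (plusD M) (r + 2 * (k : ℤ)) |
          ∃ (k : ℕ) (x : cohomology (plusD M) (r + 2 * (k : ℤ))),
            y = DirectSum.lof κ ℕ (fun k : ℕ => cohomology (plusD M) (r + 2 * (k : ℤ))) k x
              - DirectSum.lof κ ℕ (fun k : ℕ => cohomology (plusD M) (r + 2 * (k : ℤ)))
                  (k + 1) (Smap M r k x)}

/-- The class of a cocycle in the direct sum. -/
noncomputable def cls (k : ℕ) : cocycles (plusD M) (r + 2 * (k : ℤ)) →ₗ[κ]
    (⨁ k : ℕ, cohomology (plusD M) (r + 2 * (k : ℤ))) :=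
  (DirectSum.lof κ ℕ (fun k : ℕ => cohomology (plusD M) (r + 2 * (k : ℤ))) k).comp
    (Submodule.mkQ _)

theorem shift (k : ℕ) (x : cocycles (plusD M) (r + 2 * (k : ℤ))) (l : ℕ) (hl : k ≤ l) :
    ∃ y : cocycles (plusD M) (r + 2 * (l : ℤ)),
      cls M r k x - cls M r l y ∈ relS M r ∧ ambJ M _ y.1 = ambJ M _ x.1 := by
  induction l, hl using Nat.le_induction with
  | base => exact ⟨x, by rw [sub_self]; exact zero_mem _, rfl⟩
  | succ l _ ih =>
    obtain ⟨y, hy, hy'⟩ := ih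
    obtain ⟨z, hz, hz'⟩ := Smap_mk M r l y
    refine ⟨z, ?_, hz'.trans hy'⟩
    rw [← sub_add_sub_cancel _ (cls M r l y)]
    refine add_mem hy (Submodule.subset_span ⟨l, Submodule.Quotient.mk y, ?_⟩)
    rw [hz]
    rfl

theorem exists_rep (y : ⨁ k : ℕ, cohomology (plusD M) (r + 2 * (k : ℤ))) :
    ∃ k₀ : ℕ, ∀ k : ℕ, k₀ ≤ k → ∃ x : cocycles (plusD M) (r + 2 * (k : ℤ)),
      y - cls M r k x ∈ relS M r := by
  induction y using DirectSum.induction_on with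
  | zero => exact ⟨0, fun k _ => ⟨0, by simp⟩⟩
  | of i v =>
    obtain ⟨v, rfl⟩ := Submodule.Quotient.mk_surjective _ v
    refine ⟨i, fun k hk => ?_⟩
    obtain ⟨y, hy, -⟩ := shift M r i v k hk
    exact ⟨y, hy⟩
  | add x y hx hy =>
    obtain ⟨k, hk⟩ := hx
    obtain ⟨l, hl⟩ := hy
    refine ⟨max k l, fun m hm => ?_⟩
    obtain ⟨u, hu⟩ := hk m (le_trans (le_max_left _ _) hm)
    obtain ⟨v, hv⟩ := hl m (le_trans (le_max_right _ _) hm)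
    refine ⟨u + v, ?_⟩
    rw [map_add]
    have h := add_mem hu hv
    have e := sub_add_sub_comm x (cls M r m u) y (cls M r m v)
    exact e ▸ h

theorem sigmaPH_cls (k : ℕ) (x : cocycles (plusD M) (r + 2 * (k : ℤ))) :
    sigmaPH M r (cls M r k x) = phiPH M r k (Submodule.Quotient.mk x) := by
  unfold sigmaPH cls
  rw [LinearMap.comp_apply, DirectSum.toModule_lof]
  rfl

theorem relS_le : relS M r ≤ LinearMap.ker (sigmaPH M r) := by
  unfold relS
  rw [Submodule.span_le]
  rintro _ ⟨k, x, rfl⟩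
  rw [SetLike.mem_coe, LinearMap.mem_ker, map_sub]
  unfold sigmaPH
  rw [DirectSum.toModule_lof, DirectSum.toModule_lof, phiPH_Smap, sub_self]

theorem sigma_surj : Function.Surjective (sigmaPH M r) := by
  intro z
  obtain ⟨z, rfl⟩ := Submodule.Quotient.mk_surjective _ z
  obtain ⟨k₀, hk₀⟩ := exists_ambJ M r z.1
  obtain ⟨x, hx⟩ := hk₀ (r + 2 * (((k₀ - r).toNat : ℕ) : ℤ)) (by omega) (by omega)
  have hc : x ∈ cocycles (plusD M) _ := by
    rw [mem_cocycles_plus, hx]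
    exact (mem_cocycles_p M r z.1).1 z.2
  refine ⟨cls M r _ ⟨x, hc⟩, ?_⟩
  obtain ⟨y, hy, hy'⟩ := phiPH_mk M r _ ⟨x, hc⟩
  rw [sigmaPH_cls, hy]
  congr 1
  exact Subtype.ext (ambK_inj M r (hy'.trans hx))

theorem ker_le : LinearMap.ker (sigmaPH M r) ≤ relS M r := by
  intro y hy
  obtain ⟨k, hk⟩ := exists_rep M r y
  obtain ⟨x, hx⟩ := hk k le_rfl
  have h1 : sigmaPH M r (cls M r k x) = 0 := by
    have := relS_le M r hx
    rw [LinearMap.mem_ker, map_sub, LinearMap.mem_ker.1 hy, zero_sub, neg_eq_zero] at this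
    exact this
  obtain ⟨z, hz, hz'⟩ := phiPH_mk M r k x
  rw [sigmaPH_cls, hz, cohomology_mk_eq, mem_cobound_p] at h1
  obtain ⟨b, hb⟩ := h1
  obtain ⟨k₀, hk₀⟩ := exists_ambJ M (r - 1) b
  obtain ⟨l, hl⟩ : ∃ l : ℕ, l = k + (k₀ - r + 1).toNat := ⟨_, rfl⟩
  obtain ⟨w, hw⟩ := hk₀ (r + 2 * (l : ℤ) - 1) (by omega) (by omega)
  obtain ⟨x', hx', hxx⟩ := shift M r k x l (by omega)
  have h0 : cls M r l x' = 0 := by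
    have : (Submodule.Quotient.mk x' : cohomology (plusD M) (r + 2 * (l : ℤ))) = 0 := by
      rw [cohomology_mk_eq, mem_cobound_plus]
      exact ⟨w, by rw [hw, hb, hz', hxx]⟩
    unfold cls
    rw [LinearMap.comp_apply, Submodule.mkQ_apply, this, map_zero]
  rw [h0, sub_zero] at hx'
  simpa using add_mem hx hx'

end Main

/-- for `r ≥ 0`, the canonical map
`colim_k ^+H^{r+2k}_β → PH^r` is an isomorphism of `κ`-vector spaces; equivalently, the
canonical map `⊕_k ^+H^{r+2k}_β → PH^r` is surjective and its kernel is exactly the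
submodule of relations defining the direct limit. -/
theorem statement0 (κ : Type) [Field κ] (M : Mixed κ) (r : ℤ) (hr : 0 ≤ r) :
    Function.Surjective (sigmaPH M r) ∧
    LinearMap.ker (sigmaPH M r) =
      Submodule.span κ
        {y : ⨁ k : ℕ, cohomology (plusD M) (r + 2 * (k : ℤ)) |
          ∃ (k : ℕ) (x : cohomology (plusD M) (r + 2 * (k : ℤ))),
            y = DirectSum.lof κ ℕ (fun k : ℕ => cohomology (plusD M) (r + 2 * (k : ℤ))) k x
              - DirectSum.lof κ ℕ (fun k : ℕ => cohomology (plusD M) (r + 2 * (k : ℤ)))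
                  (k + 1) (Smap M r k x)} := by
  exact ⟨sigma_surj M r, le_antisymm (ker_le M r) (relS_le M r)⟩

end CDGA
end

section
/- Let f : (C₁, δ₁, β₁) → (C₂, δ₂, β₂) be a morphism of mixed complexes over κ. If the induced map H^n(f) : H^n(C₁, δ₁) → H^n(C₂, δ₂) is an isomorphism for every n, then the induced maps ^+H^r_β(f) : ^+H^r_β(C₁) → ^+H^r_β(C₂) and PH^r(f) : PH^r(C₁) → PH^r(C₂) are isomorphisms for every r. -/
open LinearMap DirectSum

namespace CDGA

section Aux

variable {κ : Type} [Field κ]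

/-- The total space. -/
abbrev Tot (M : Mixed κ) : Type := ⨁ n : ℤ, M.C n

/-- Inclusion of a homogeneous component. -/
noncomputable def hinc (M : Mixed κ) (n : ℤ) : M.C n →ₗ[κ] Tot M :=
  DirectSum.lof κ ℤ M.C n

lemma hinc_same (M : Mixed κ) (n : ℤ) (x : M.C n) : hinc M n x n = x :=
  DirectSum.lof_apply κ n x

lemma hinc_ne (M : Mixed κ) (n m : ℤ) (x : M.C n) (h : n ≠ m) : hinc M n x m = 0 :=
  DirectSum.of_eq_of_ne n m x h.symm

lemma hinc_fcast (M : Mixed κ) {m n : ℤ} (h : m = n) (x : M.C m) :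
    hinc M n (fcast (κ := κ) h x) = hinc M m x := by
  subst h; rfl

/-- Total differential. -/
noncomputable def DT (M : Mixed κ) : Tot M →ₗ[κ] Tot M :=
  DirectSum.toModule κ ℤ (Tot M) fun n =>
    (hinc M (n + 1)).comp (M.δ n) + (hinc M (n - 1)).comp (M.β n)

lemma DT_hinc (M : Mixed κ) (n : ℤ) (x : M.C n) :
    DT M (hinc M n x) = hinc M (n + 1) (M.δ n x) + hinc M (n - 1) (M.β n x) := by
  simp [DT, hinc]

lemma DT_DT (M : Mixed κ) (t : Tot M) : DT M (DT M t) = 0 := by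
  have : (DT M).comp (DT M) = 0 := by
    apply DirectSum.linearMap_ext
    intro n
    ext1 x
    change DT M (DT M (hinc M n x)) = 0
    have h := congrArg (hinc M n) (M.βδ n x)
    rw [map_add, hinc_fcast, hinc_fcast, map_zero] at h
    rw [DT_hinc, map_add, DT_hinc, DT_hinc, M.δδ, M.ββ, map_zero, map_zero, zero_add, add_zero, h]
  exact LinearMap.congr_fun this t

/-- Total map. -/
noncomputable def phiT {M₁ M₂ : Mixed κ} (f : ∀ n : ℤ, M₁.C n →ₗ[κ] M₂.C n) :
    Tot M₁ →ₗ[κ] Tot M₂ :=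
  DirectSum.toModule κ ℤ (Tot M₂) fun n => (hinc M₂ n).comp (f n)

lemma phiT_hinc {M₁ M₂ : Mixed κ} (f : ∀ n : ℤ, M₁.C n →ₗ[κ] M₂.C n) (n : ℤ) (x : M₁.C n) :
    phiT f (hinc M₁ n x) = hinc M₂ n (f n x) := by
  simp [phiT, hinc]

lemma phiT_DT {M₁ M₂ : Mixed κ} (f : ∀ n : ℤ, M₁.C n →ₗ[κ] M₂.C n)
    (hδ : ∀ (n : ℤ) (x : M₁.C n), M₂.δ n (f n x) = f (n + 1) (M₁.δ n x))
    (hβ : ∀ (n : ℤ) (x : M₁.C n), M₂.β n (f n x) = f (n - 1) (M₁.β n x)) (t : Tot M₁) :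
    phiT f (DT M₁ t) = DT M₂ (phiT f t) := by
  have : (phiT f).comp (DT M₁) = (DT M₂).comp (phiT f) := by
    apply DirectSum.linearMap_ext
    intro n
    ext1 x
    change phiT f (DT M₁ (hinc M₁ n x)) = DT M₂ (phiT f (hinc M₁ n x))
    rw [DT_hinc, map_add, phiT_hinc, phiT_hinc, phiT_hinc, DT_hinc, hδ, hβ]
  exact LinearMap.congr_fun this t

/-- Elements supported in degrees satisfying `p`. -/
def Sup (M : Mixed κ) (p : ℤ → Prop) : Submodule κ (Tot M) where
  carrier := {t | ∀ n, ¬ p n → t n = 0}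
  add_mem' := fun {a b} ha hb n hn => by
    rw [DirectSum.add_apply, ha n hn, hb n hn, add_zero]
  zero_mem' := fun n _ => rfl
  smul_mem' := fun c a ha n hn => by
    rw [DirectSum.smul_apply, ha n hn, smul_zero]

lemma Sup_mono (M : Mixed κ) {p q : ℤ → Prop} (h : ∀ n, p n → q n) {t : Tot M}
    (ht : t ∈ Sup M p) : t ∈ Sup M q := fun n hn => ht n fun hp => hn (h n hp)

lemma hinc_mem (M : Mixed κ) {p : ℤ → Prop} {n : ℤ} (h : p n) (x : M.C n) :
    hinc M n x ∈ Sup M p := fun m hm => hinc_ne M n m x (by rintro rfl; exact hm h)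

lemma map_mem_of_hinc {M : Mixed κ} {V : Type} [AddCommGroup V] [Module κ V] (L : Tot M →ₗ[κ] V)
    (W : Submodule κ V) (p : ℤ → Prop) (h : ∀ n x, p n → L (hinc M n x) ∈ W) (t : Tot M)
    (ht : t ∈ Sup M p) : L t ∈ W := by
  classical
  rw [← DirectSum.sum_support_of t, map_sum]
  refine Submodule.sum_mem _ fun i hi => h i _ ?_
  by_contra hp
  exact (DFinsupp.mem_support_iff.1 hi) (ht i hp)

lemma DT_mem (M : Mixed κ) {p q : ℤ → Prop} (h₁ : ∀ n, p n → q (n + 1))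
    (h₂ : ∀ n, p n → q (n - 1)) (t : Tot M) (ht : t ∈ Sup M p) : DT M t ∈ Sup M q := by
  refine map_mem_of_hinc _ _ p (fun n x hn => ?_) t ht
  rw [DT_hinc]
  exact Submodule.add_mem _ (hinc_mem M (h₁ n hn) _) (hinc_mem M (h₂ n hn) _)

lemma phiT_mem {M₁ M₂ : Mixed κ} (f : ∀ n : ℤ, M₁.C n →ₗ[κ] M₂.C n) {p : ℤ → Prop}
    (t : Tot M₁) (ht : t ∈ Sup M₁ p) : phiT f t ∈ Sup M₂ p := by
  refine map_mem_of_hinc _ _ p (fun n x hn => ?_) t ht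
  rw [phiT_hinc]
  exact hinc_mem _ hn _

/-- Degrees at most `r` of the parity of `r`. -/
def Fp (r : ℤ) : ℤ → Prop := fun n => n ≤ r ∧ n % 2 = r % 2

/-- Degrees of the parity of `r`. -/
def Pp (r : ℤ) : ℤ → Prop := fun n => n % 2 = r % 2

lemma split_top (M : Mixed κ) (n m : ℤ) (hm : m + 2 = n) (t : Tot M) (ht : t ∈ Sup M (Fp n)) :
    ∃ t', t' ∈ Sup M (Fp m) ∧ t = hinc M n (t n) + t' := by
  refine ⟨t - hinc M n (t n), fun j hj => ?_, by abel⟩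
  rw [DirectSum.sub_apply]
  by_cases h : n = j
  · subst h; rw [hinc_same, sub_self]
  · rw [hinc_ne _ _ _ _ h, sub_zero]
    apply ht
    unfold Fp at *
    omega

lemma eq_zero_of_neg (M : Mixed κ) (n : ℤ) (hn : n < 0) (t : Tot M) (ht : t ∈ Sup M (Fp n)) :
    t = 0 := by
  refine DFinsupp.ext fun j => ?_
  by_cases h : j < 0
  · have := M.trivNeg j h
    exact Subsingleton.elim _ _
  · apply ht
    unfold Fp
    omega

section general

variable {C₁ C₂ : ℤ → Type}
  [∀ n, AddCommGroup (C₁ n)] [∀ n, Module κ (C₁ n)]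
  [∀ n, AddCommGroup (C₂ n)] [∀ n, Module κ (C₂ n)]

lemma mem_cobound (d : ∀ n : ℤ, C₁ n →ₗ[κ] C₁ (n + 1)) {a b : ℤ} (h : a + 1 = b) (y : C₁ b) :
    y ∈ cobound d b ↔ ∃ z : C₁ a, fcast (κ := κ) h (d a z) = y := by
  obtain rfl : a = b - 1 := by omega
  rfl

lemma mem_cobound_succ (d : ∀ n : ℤ, C₁ n →ₗ[κ] C₁ (n + 1)) (a : ℤ) (y : C₁ (a + 1)) :
    y ∈ cobound d (a + 1) ↔ ∃ z : C₁ a, d a z = y := mem_cobound d rfl y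

/-- Acyclicity of the cone, elementwise. -/
def ConeAc (d₁ : ∀ n : ℤ, C₁ n →ₗ[κ] C₁ (n + 1)) (d₂ : ∀ n : ℤ, C₂ n →ₗ[κ] C₂ (n + 1))
    (g : ∀ n, C₁ n →ₗ[κ] C₂ n) : Prop :=
  ∀ (n : ℤ) (x : C₁ (n + 1)) (y : C₂ n), d₁ (n + 1) x = 0 → g (n + 1) x = d₂ n y →
    ∃ x' : C₁ n, d₁ n x' = x ∧ y - g n x' ∈ cobound d₂ n


lemma Hmap_bij_iff (d₁ : ∀ n : ℤ, C₁ n →ₗ[κ] C₁ (n + 1)) (d₂ : ∀ n : ℤ, C₂ n →ₗ[κ] C₂ (n + 1))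
    (g : ∀ n, C₁ n →ₗ[κ] C₂ n) (hg : ∀ n x, d₂ n (g n x) = g (n + 1) (d₁ n x)) (r : ℤ) :
    Function.Bijective (Hmap₂ d₁ d₂ r r (g r)) ↔
      (∀ x, d₁ r x = 0 → g r x ∈ cobound d₂ r → x ∈ cobound d₁ r) ∧
      (∀ y, d₂ r y = 0 → ∃ x, d₁ r x = 0 ∧ y - g r x ∈ cobound d₂ r) := by
  have hc : cocycles d₁ r ≤ (cocycles d₂ r).comap (g r) ∧
      cobound d₁ r ≤ (cobound d₂ r).comap (g r) := by
    constructor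
    · intro x hx
      have hx' : d₁ r x = 0 := hx
      change d₂ r (g r x) = 0
      rw [hg, hx', map_zero]
    · obtain ⟨a, rfl⟩ : ∃ a, r = a + 1 := ⟨r - 1, by omega⟩
      intro x hx
      obtain ⟨z, rfl⟩ := (mem_cobound_succ d₁ a x).1 hx
      exact (mem_cobound_succ d₂ a _).2 ⟨g a z, hg a z⟩
  unfold Hmap₂
  rw [dif_pos hc]
  refine and_congr ?_ ?_
  · rw [injective_iff_map_eq_zero]
    constructor
    · intro h x hx hgx
      have h2 := h (Submodule.Quotient.mk ⟨x, hx⟩) (by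
        rw [Submodule.mapQ_apply, Submodule.Quotient.mk_eq_zero]
        exact hgx)
      rw [Submodule.Quotient.mk_eq_zero] at h2
      exact h2
    · intro h q
      obtain ⟨⟨x, hx⟩, rfl⟩ := Submodule.Quotient.mk_surjective _ q
      intro h2
      rw [Submodule.mapQ_apply, Submodule.Quotient.mk_eq_zero] at h2
      rw [Submodule.Quotient.mk_eq_zero]
      exact h x hx h2
  · constructor
    · intro h y hy
      obtain ⟨q, hq⟩ := h (Submodule.Quotient.mk ⟨y, hy⟩)
      obtain ⟨⟨x, hx⟩, rfl⟩ := Submodule.Quotient.mk_surjective _ q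
      rw [Submodule.mapQ_apply] at hq
      have := (Submodule.Quotient.eq _).1 hq.symm
      exact ⟨x, hx, this⟩
    · intro h q
      obtain ⟨⟨y, hy⟩, rfl⟩ := Submodule.Quotient.mk_surjective _ q
      obtain ⟨x, hx, hxy⟩ := h y hy
      refine ⟨Submodule.Quotient.mk ⟨x, hx⟩, ?_⟩
      rw [Submodule.mapQ_apply]
      symm
      rw [Submodule.Quotient.eq]
      exact hxy

lemma Hmap_bij_of_cone (d₁ : ∀ n : ℤ, C₁ n →ₗ[κ] C₁ (n + 1))
    (d₂ : ∀ n : ℤ, C₂ n →ₗ[κ] C₂ (n + 1))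
    (g : ∀ n, C₁ n →ₗ[κ] C₂ n) (hg : ∀ n x, d₂ n (g n x) = g (n + 1) (d₁ n x))
    (h : ConeAc d₁ d₂ g) (r : ℤ) :
    Function.Bijective (Hmap₂ d₁ d₂ r r (g r)) := by
  rw [Hmap_bij_iff d₁ d₂ g hg]
  constructor
  · obtain ⟨a, rfl⟩ : ∃ a, r = a + 1 := ⟨r - 1, by omega⟩
    intro x hx hgx
    obtain ⟨y, hy⟩ := (mem_cobound_succ d₂ a _).1 hgx
    obtain ⟨x', hx', -⟩ := h a x y hx hy.symm
    exact (mem_cobound_succ d₁ a _).2 ⟨x', hx'⟩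
  · intro y hy
    obtain ⟨x', hx', hy'⟩ := h r 0 y (map_zero _) (by rw [map_zero, hy])
    exact ⟨x', hx', hy'⟩

lemma cone_of_Hmap_bij (d₁ : ∀ n : ℤ, C₁ n →ₗ[κ] C₁ (n + 1))
    (d₂ : ∀ n : ℤ, C₂ n →ₗ[κ] C₂ (n + 1))
    (g : ∀ n, C₁ n →ₗ[κ] C₂ n) (hg : ∀ n x, d₂ n (g n x) = g (n + 1) (d₁ n x))
    (h : ∀ r, Function.Bijective (Hmap₂ d₁ d₂ r r (g r))) : ConeAc d₁ d₂ g := by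
  intro n x y hx hxy
  have h₁ := ((Hmap_bij_iff d₁ d₂ g hg (n + 1)).1 (h (n + 1))).1 x hx
    ((mem_cobound_succ d₂ n _).2 ⟨y, hxy.symm⟩)
  obtain ⟨x', hx'⟩ := (mem_cobound_succ d₁ n _).1 h₁
  obtain ⟨x'', hx'', hy⟩ := ((Hmap_bij_iff d₁ d₂ g hg n).1 (h n)).2 (y - g n x') (by
    rw [map_sub, hg, hx', hxy, sub_self])
  refine ⟨x' + x'', by rw [map_add, hx', hx'', add_zero], ?_⟩
  rw [map_add, ← sub_sub]
  exact hy

/-- Cone acyclicity transported along embeddings into a total space. -/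
lemma cone_transport (d₁ : ∀ n : ℤ, C₁ n →ₗ[κ] C₁ (n + 1))
    (d₂ : ∀ n : ℤ, C₂ n →ₗ[κ] C₂ (n + 1)) (g : ∀ n, C₁ n →ₗ[κ] C₂ n)
    {T₁ T₂ : Type} [AddCommGroup T₁] [AddCommGroup T₂] [Module κ T₁] [Module κ T₂]
    (D₁ : T₁ →ₗ[κ] T₁) (D₂ : T₂ →ₗ[κ] T₂) (φ : T₁ →ₗ[κ] T₂)
    (E₁ : ∀ n, C₁ n →ₗ[κ] T₁) (E₂ : ∀ n, C₂ n →ₗ[κ] T₂)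
    (i₁ : ∀ n, Function.Injective (E₁ n)) (i₂ : ∀ n, Function.Injective (E₂ n))
    (c₁ : ∀ n x, E₁ (n + 1) (d₁ n x) = D₁ (E₁ n x))
    (c₂ : ∀ n x, E₂ (n + 1) (d₂ n x) = D₂ (E₂ n x))
    (cg : ∀ n x, E₂ n (g n x) = φ (E₁ n x))
    (hφ : ∀ x, φ (D₁ x) = D₂ (φ x))
    (F₁ : ℤ → Submodule κ T₁) (F₂ : ℤ → Submodule κ T₂)
    (m₁ : ∀ n x, E₁ n x ∈ F₁ n) (m₂ : ∀ n x, E₂ n x ∈ F₂ n)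
    (s₁ : ∀ n, ∀ t ∈ F₁ n, ∃ x, E₁ n x = t) (s₂ : ∀ n, ∀ t ∈ F₂ n, ∃ x, E₂ n x = t)
    (cone : ∀ n, ∀ x ∈ F₁ (n + 1), ∀ y ∈ F₂ n, D₁ x = 0 → φ x = D₂ y →
      ∃ x' ∈ F₁ n, ∃ y' ∈ F₂ (n - 1), D₁ x' = x ∧ y - φ x' = D₂ y') (r : ℤ) :
    Function.Bijective (Hmap₂ d₁ d₂ r r (g r)) := by
  refine Hmap_bij_of_cone d₁ d₂ g (fun n x => i₂ _ ?_) ?_ r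
  · rw [c₂, cg, cg, c₁, hφ]
  · intro n x y hx hxy
    obtain ⟨x', hx', y', hy', e₁, e₂⟩ := cone n _ (m₁ _ x) _ (m₂ _ y)
      (by rw [← c₁, hx, map_zero]) (by rw [← cg, hxy, c₂])
    obtain ⟨x', rfl⟩ := s₁ _ _ hx'
    obtain ⟨y', rfl⟩ := s₂ _ _ hy'
    refine ⟨x', i₁ _ (by rw [c₁, e₁]), ?_⟩
    obtain ⟨a, rfl⟩ : ∃ a, n = a + 1 := ⟨n - 1, by omega⟩
    refine (mem_cobound d₂ (show a + 1 - 1 + 1 = a + 1 by omega) _).2 ⟨y', i₂ _ ?_⟩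
    have key : ∀ (p q : ℤ) (h : p = q) (w : C₂ p), E₂ q (fcast (κ := κ) h w) = E₂ p w := by
      rintro p _ rfl w; rfl
    rw [key, c₂, ← e₂, map_sub, cg]

end general

lemma coneF {M₁ M₂ : Mixed κ}
    (f : ∀ n : ℤ, M₁.C n →ₗ[κ] M₂.C n)
    (hδ : ∀ (n : ℤ) (x : M₁.C n), M₂.δ n (f n x) = f (n + 1) (M₁.δ n x))
    (hβ : ∀ (n : ℤ) (x : M₁.C n), M₂.β n (f n x) = f (n - 1) (M₁.β n x))
    (hc : ConeAc M₁.δ M₂.δ f) (k : ℕ) :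
    ∀ n : ℤ, n + 1 < 2 * k → ∀ x ∈ Sup M₁ (Fp (n + 1)), ∀ y ∈ Sup M₂ (Fp n),
      DT M₁ x = 0 → phiT f x = DT M₂ y →
      ∃ x' ∈ Sup M₁ (Fp n), ∃ y' ∈ Sup M₂ (Fp (n - 1)), DT M₁ x' = x ∧
        y - phiT f x' = DT M₂ y' := by
  induction k with
  | zero =>
    intro n hn x hx y hy _ _
    have e₁ := eq_zero_of_neg M₁ _ (by simpa using hn) x hx
    have e₂ := eq_zero_of_neg M₂ _ (by simp at hn; omega) y hy
    subst e₁ e₂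
    exact ⟨0, Submodule.zero_mem _, 0, Submodule.zero_mem _, by simp, by simp⟩
  | succ k ih =>
    intro n hn x hx y hy hDx hxy
    obtain ⟨x₁, hx₁, ex⟩ := split_top M₁ (n + 1) (n - 1) (by omega) x hx
    obtain ⟨y₁, hy₁, ey⟩ := split_top M₂ n (n - 2) (by omega) y hy
    generalize x (n + 1) = a at ex
    generalize y n = b at ey
    have d1 : (DT M₁ x₁) (n + 1 + 1) = 0 :=
      DT_mem M₁ (q := Fp n) (by unfold Fp; omega) (by unfold Fp; omega) x₁ hx₁ _
        (by unfold Fp; omega)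
    have d2 : (DT M₂ y₁) (n + 1) = 0 :=
      DT_mem M₂ (q := Fp (n - 1)) (by unfold Fp; omega) (by unfold Fp; omega) y₁ hy₁ _
        (by unfold Fp; omega)
    have d3 : (phiT f x₁) (n + 1) = 0 := phiT_mem f x₁ hx₁ _ (by unfold Fp; omega)
    have ha : M₁.δ (n + 1) a = 0 := by
      have h := congrArg (fun t : Tot M₁ => t (n + 1 + 1)) hDx
      simp only [ex, map_add, DT_hinc, DirectSum.add_apply, hinc_same, d1, DirectSum.zero_apply] at h
      rw [hinc_ne _ _ _ _ (by omega)] at h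
      simpa using h
    have hab : f (n + 1) a = M₂.δ n b := by
      have h := congrArg (fun t : Tot M₂ => t (n + 1)) hxy
      simp only [ex, ey, map_add, DT_hinc, phiT_hinc, DirectSum.add_apply, hinc_same, d2, d3] at h
      rw [hinc_ne _ (n - 1) _ _ (by omega)] at h
      simpa using h
    obtain ⟨a', ha', hb'⟩ := hc n a b ha hab
    obtain ⟨c, hcc⟩ := (mem_cobound M₂.δ (show n - 1 + 1 = n by omega) _).1 hb'
    have hcc' : hinc M₂ (n - 1 + 1) (M₂.δ (n - 1) c) = hinc M₂ n b - hinc M₂ n (f n a') := by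
      rw [← map_sub, ← hcc, hinc_fcast]
    have ex2 : x - DT M₁ (hinc M₁ n a') = x₁ - hinc M₁ (n - 1) (M₁.β n a') := by
      rw [DT_hinc, ha', ex]; abel
    have ey2 : y - phiT f (hinc M₁ n a') - DT M₂ (hinc M₂ (n - 1) c) =
        y₁ - hinc M₂ (n - 1 - 1) (M₂.β (n - 1) c) := by
      rw [DT_hinc, phiT_hinc, hcc', ey]; abel
    obtain ⟨x', hx', y', hy', e₁, e₂⟩ := ih (n - 2) (by push_cast at hn; omega)
      (x - DT M₁ (hinc M₁ n a')) (by
        rw [ex2]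
        exact Submodule.sub_mem _ (Sup_mono _ (by unfold Fp; omega) hx₁)
          (hinc_mem _ (by unfold Fp; omega) _))
      (y - phiT f (hinc M₁ n a') - DT M₂ (hinc M₂ (n - 1) c)) (by
        rw [ey2]
        exact Submodule.sub_mem _ hy₁ (hinc_mem _ (by unfold Fp; omega) _))
      (by rw [map_sub, hDx, DT_DT, sub_zero])
      (by rw [map_sub, map_sub, map_sub, DT_DT, phiT_DT f hδ hβ, hxy, sub_zero])
    refine ⟨x' + hinc M₁ n a', ?_, y' + hinc M₂ (n - 1) c, ?_, ?_, ?_⟩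
    · exact Submodule.add_mem _ (Sup_mono _ (by unfold Fp; omega) hx')
        (hinc_mem _ (by unfold Fp; omega) _)
    · exact Submodule.add_mem _ (Sup_mono _ (by unfold Fp; omega) hy')
        (hinc_mem _ (by unfold Fp; omega) _)
    · rw [map_add, e₁]; abel
    · rw [map_add, map_add, ← e₂]; abel

lemma exists_bound (M : Mixed κ) (t : Tot M) : ∃ N : ℤ, ∀ n, N < n → t n = 0 := by
  classical
  obtain ⟨N, hN⟩ := t.support.bddAbove
  refine ⟨N, fun n hn => ?_⟩
  by_contra h
  have := hN (Finset.mem_coe.2 (DFinsupp.mem_support_iff.2 h))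
  omega

lemma coneP {M₁ M₂ : Mixed κ}
    (f : ∀ n : ℤ, M₁.C n →ₗ[κ] M₂.C n)
    (hδ : ∀ (n : ℤ) (x : M₁.C n), M₂.δ n (f n x) = f (n + 1) (M₁.δ n x))
    (hβ : ∀ (n : ℤ) (x : M₁.C n), M₂.β n (f n x) = f (n - 1) (M₁.β n x))
    (hc : ConeAc M₁.δ M₂.δ f) :
    ∀ n : ℤ, ∀ x ∈ Sup M₁ (Pp (n + 1)), ∀ y ∈ Sup M₂ (Pp n),
      DT M₁ x = 0 → phiT f x = DT M₂ y →
      ∃ x' ∈ Sup M₁ (Pp n), ∃ y' ∈ Sup M₂ (Pp (n - 1)), DT M₁ x' = x ∧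
        y - phiT f x' = DT M₂ y' := by
  intro n x hx y hy hDx hxy
  obtain ⟨N₁, h₁⟩ := exists_bound M₁ x
  obtain ⟨N₂, h₂⟩ := exists_bound M₂ y
  obtain ⟨N, hN, b₁, b₂⟩ : ∃ N : ℤ, N % 2 = n % 2 ∧ N₁ ≤ N ∧ N₂ ≤ N :=
    ⟨n + 2 * (|N₁| + |N₂| + |n|), by omega, by
      have := abs_nonneg N₁; have := abs_nonneg N₂; have := neg_abs_le n; have := le_abs_self N₁
      have := abs_nonneg n
      omega, by
      have := abs_nonneg N₁; have := abs_nonneg N₂; have := neg_abs_le n; have := le_abs_self N₂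
      have := abs_nonneg n
      omega⟩
  obtain ⟨x', hx', y', hy', e⟩ := coneF f hδ hβ hc (N + 2).toNat N (by omega) x
    (fun j hj => by
      by_cases hp : Pp (n + 1) j
      · apply h₁
        unfold Fp at hj
        unfold Pp at hp
        omega
      · exact hx j hp) y
    (fun j hj => by
      by_cases hp : Pp n j
      · apply h₂
        unfold Fp at hj
        unfold Pp at hp
        omega
      · exact hy j hp) hDx hxy
  exact ⟨x', Sup_mono _ (by unfold Fp Pp; omega) hx', y',
    Sup_mono _ (by unfold Fp Pp; omega) hy', e⟩

/-- Embedding of the periodic complex. -/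
noncomputable def EP (M : Mixed κ) (r : ℤ) : pC M r →ₗ[κ] Tot M :=
  DirectSum.toModule κ {m : ℤ // m % 2 = r % 2} (Tot M) fun n => hinc M n.1

lemma EP_lof (M : Mixed κ) (r : ℤ) (n : {m : ℤ // m % 2 = r % 2}) (x : M.C n.1) :
    EP M r (DirectSum.lof κ {m : ℤ // m % 2 = r % 2} (fun m => M.C m.1) n x) = hinc M n.1 x := by
  simp [EP]

lemma EP_apply (M : Mixed κ) (r : ℤ) (w : pC M r) (n : {m : ℤ // m % 2 = r % 2}) :
    EP M r w n.1 = w n := by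
  have : (DirectSum.component κ ℤ M.C n.1).comp (EP M r) =
      DirectSum.component κ {m : ℤ // m % 2 = r % 2} (fun m => M.C m.1) n := by
    apply DirectSum.linearMap_ext
    intro m
    ext1 x
    change EP M r (DirectSum.lof κ {m : ℤ // m % 2 = r % 2} (fun m => M.C m.1) m x) n.1 =
      DirectSum.lof κ {m : ℤ // m % 2 = r % 2} (fun m => M.C m.1) m x n
    rw [EP_lof]
    by_cases h : m = n
    · subst h
      rw [hinc_same, DirectSum.lof_apply]
    · rw [hinc_ne _ _ _ _ (fun h' => h (Subtype.ext h'))]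
      exact (DirectSum.of_eq_of_ne (β := fun m : {m : ℤ // m % 2 = r % 2} => M.C m.1)
        m n x (Ne.symm h)).symm
  exact LinearMap.congr_fun this w

lemma EP_inj (M : Mixed κ) (r : ℤ) : Function.Injective (EP M r) := by
  intro a b h
  refine DFinsupp.ext fun n => ?_
  have := congrArg (fun t : Tot M => t n.1) h
  simp only [EP_apply] at this
  exact this

lemma EP_mem (M : Mixed κ) (r : ℤ) (w : pC M r) : EP M r w ∈ Sup M (Pp r) := by
  induction w using DirectSum.induction_on with
  | zero => rw [map_zero]; exact Submodule.zero_mem _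
  | of n x =>
    have := EP_lof M r n x
    rw [DirectSum.lof_eq_of] at this
    rw [this]
    exact hinc_mem M (p := Pp r) (n := n.1) n.2 x
  | add a b ha hb => rw [map_add]; exact Submodule.add_mem _ ha hb

lemma EP_surj (M : Mixed κ) (r : ℤ) (t : Tot M) (ht : t ∈ Sup M (Pp r)) :
    ∃ w, EP M r w = t := by
  refine ⟨DFinsupp.subtypeDomain (fun m : ℤ => m % 2 = r % 2) t, DFinsupp.ext fun n => ?_⟩
  by_cases h : n % 2 = r % 2
  · exact EP_apply M r _ ⟨n, h⟩
  · rw [ht n h]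
    exact EP_mem M r _ n h

lemma EP_D (M : Mixed κ) (r : ℤ) (w : pC M r) : EP M (r + 1) (pD M r w) = DT M (EP M r w) := by
  have : (EP M (r + 1)).comp (pD M r) = (DT M).comp (EP M r) := by
    apply DirectSum.linearMap_ext
    intro n
    ext1 x
    simp only [LinearMap.comp_apply, EP_lof, DT_hinc]
    simp only [pD, DirectSum.toModule_lof, LinearMap.add_apply, LinearMap.comp_apply, map_add]
    exact congrArg₂ (· + ·) (EP_lof M (r + 1) ⟨n.1 + 1, _⟩ _) (EP_lof M (r + 1) ⟨n.1 - 1, _⟩ _)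
  exact LinearMap.congr_fun this w

lemma EP_map {M₁ M₂ : Mixed κ} (f : ∀ n : ℤ, M₁.C n →ₗ[κ] M₂.C n) (r : ℤ) (w : pC M₁ r) :
    EP M₂ r (pMap f r w) = phiT f (EP M₁ r w) := by
  have : (EP M₂ r).comp (pMap f r) = (phiT f).comp (EP M₁ r) := by
    apply DirectSum.linearMap_ext
    intro n
    ext1 x
    simp only [LinearMap.comp_apply, EP_lof, phiT_hinc]
    simp only [pMap, DirectSum.toModule_lof, LinearMap.comp_apply, EP_lof]
  exact LinearMap.congr_fun this w

/-- Embedding of the plus complex. -/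
noncomputable def EF (M : Mixed κ) (r : ℤ) : plusC M r →ₗ[κ] Tot M :=
  ∑ k ∈ Finset.range (r.toNat + 1), (hinc M (r - 2 * (k : ℤ))).comp (LinearMap.proj k)

lemma neg_zero_of (M : Mixed κ) (n : ℤ) (h : n < 0) (x : M.C n) : x = 0 := by
  have := M.trivNeg n h
  exact Subsingleton.elim _ _

lemma EF_eq (M : Mixed κ) (r : ℤ) (K : ℕ) (hK : r.toNat + 1 ≤ K) (w : plusC M r) :
    EF M r w = ∑ k ∈ Finset.range K, hinc M (r - 2 * (k : ℤ)) (w k) := by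
  have : EF M r w = ∑ k ∈ Finset.range (r.toNat + 1), hinc M (r - 2 * (k : ℤ)) (w k) := by
    simp [EF, LinearMap.sum_apply]
  rw [this]
  refine Finset.sum_subset (Finset.range_mono hK) fun k _ hk => ?_
  rw [neg_zero_of M _ (by simp at hk; omega) (w k), map_zero]

lemma EF_apply (M : Mixed κ) (r : ℤ) (w : plusC M r) (k : ℕ) :
    EF M r w (r - 2 * (k : ℤ)) = w k := by
  rw [EF_eq M r (r.toNat + 1 + k + 1) (by omega)]
  have := map_sum (DirectSum.component κ ℤ M.C (r - 2 * (k : ℤ)))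
    (fun k : ℕ => hinc M (r - 2 * (k : ℤ)) (w k)) (Finset.range (r.toNat + 1 + k + 1))
  refine this.trans ?_
  rw [Finset.sum_eq_single k]
  · exact hinc_same _ _ _
  · intro j _ hj
    exact hinc_ne _ _ _ _ (by omega)
  · intro h
    exact absurd (Finset.mem_range.2 (by omega)) h

lemma EF_inj (M : Mixed κ) (r : ℤ) : Function.Injective (EF M r) := by
  intro a b h
  funext k
  have := congrArg (fun t : Tot M => t (r - 2 * (k : ℤ))) h
  simp only [EF_apply] at this
  exact this

lemma EF_mem (M : Mixed κ) (r : ℤ) (w : plusC M r) : EF M r w ∈ Sup M (Fp r) := by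
  rw [EF_eq M r _ le_rfl]
  exact Submodule.sum_mem _ fun k _ => hinc_mem M (by unfold Fp; omega) _

lemma EF_surj (M : Mixed κ) (r : ℤ) (t : Tot M) (ht : t ∈ Sup M (Fp r)) :
    ∃ w, EF M r w = t := by
  refine ⟨fun k => t (r - 2 * (k : ℤ)), DFinsupp.ext fun n => ?_⟩
  by_cases h : Fp r n
  · obtain ⟨k, rfl⟩ : ∃ k : ℕ, n = r - 2 * (k : ℤ) := by
      unfold Fp at h
      exact ⟨((r - n) / 2).toNat, by omega⟩
    exact EF_apply M r _ k
  · rw [ht n h]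
    exact EF_mem M r _ n h

lemma EF_map {M₁ M₂ : Mixed κ} (f : ∀ n : ℤ, M₁.C n →ₗ[κ] M₂.C n) (r : ℤ) (w : plusC M₁ r) :
    EF M₂ r (plusMap f r w) = phiT f (EF M₁ r w) := by
  rw [EF_eq _ r _ le_rfl, EF_eq _ r _ le_rfl, map_sum]
  refine Finset.sum_congr rfl fun k _ => ?_
  rw [phiT_hinc]
  rfl

lemma EF_D (M : Mixed κ) (r : ℤ) (w : plusC M r) :
    EF M (r + 1) (plusD M r w) = DT M (EF M r w) := by
  have hz : ∀ k : ℕ, hinc M (r + 1 - 2 * ((k + 1 : ℕ) : ℤ)) (plusD M r w (k + 1)) =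
      hinc M (r - 2 * ((k + 1 : ℕ) : ℤ) + 1) (M.δ _ (w (k + 1))) +
      hinc M (r - 2 * (k : ℤ) - 1) (M.β _ (w k)) := by
    intro k
    change hinc M (r + 1 - 2 * ((k + 1 : ℕ) : ℤ)) (fcast (κ := κ) _ (M.δ _ (w (k + 1))) +
      fcast (κ := κ) _ (M.β _ (w k))) = _
    rw [map_add, hinc_fcast, hinc_fcast]
  have h0 : hinc M (r + 1 - 2 * ((0 : ℕ) : ℤ)) (plusD M r w 0) =
      hinc M (r - 2 * ((0 : ℕ) : ℤ) + 1) (M.δ _ (w 0)) := by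
    change hinc M (r + 1 - 2 * ((0 : ℕ) : ℤ)) (fcast (κ := κ) _ (M.δ _ (w 0))) = _
    rw [hinc_fcast]
  rw [EF_eq M (r + 1) (r.toNat + 2 + 1) (by omega), EF_eq M r (r.toNat + 2 + 1) (by omega),
    map_sum, Finset.sum_range_succ', h0]
  simp only [hz, DT_hinc]
  rw [Finset.sum_add_distrib, Finset.sum_add_distrib,
    Finset.sum_range_succ' (fun k : ℕ => hinc M (r - 2 * (k : ℤ) + 1) (M.δ _ (w k))),
    Finset.sum_range_succ (fun k : ℕ => hinc M (r - 2 * (k : ℤ) - 1) (M.β _ (w k))) (r.toNat + 2),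
    neg_zero_of M _ (by push_cast; omega) (w (r.toNat + 2)), map_zero, map_zero]
  abel

end Aux


/-- if a morphism of mixed complexes induces an isomorphism on the
cohomology `H^n(C, δ)` for every `n`, then it induces isomorphisms on `^+H^r_β`
and on `PH^r` for every `r`. -/
theorem statement2 (κ : Type) [Field κ] (M₁ M₂ : Mixed κ)
    (f : ∀ n : ℤ, M₁.C n →ₗ[κ] M₂.C n)
    (hδ : ∀ (n : ℤ) (x : M₁.C n), M₂.δ n (f n x) = f (n + 1) (M₁.δ n x))
    (hβ : ∀ (n : ℤ) (x : M₁.C n), M₂.β n (f n x) = f (n - 1) (M₁.β n x))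
    (hiso : ∀ n : ℤ, Function.Bijective (Hmap₂ M₁.δ M₂.δ n n (f n))) :
    (∀ r : ℤ, Function.Bijective (Hmap₂ (plusD M₁) (plusD M₂) r r (plusMap f r))) ∧
    (∀ r : ℤ, Function.Bijective (Hmap₂ (pD M₁) (pD M₂) r r (pMap f r))) := by
  have hc := cone_of_Hmap_bij M₁.δ M₂.δ f hδ hiso
  constructor
  · exact cone_transport _ _ (plusMap f) (DT M₁) (DT M₂) (phiT f) (EF M₁) (EF M₂)
      (EF_inj M₁) (EF_inj M₂) (EF_D M₁) (EF_D M₂) (EF_map f) (phiT_DT f hδ hβ)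
      (fun n => Sup M₁ (Fp n)) (fun n => Sup M₂ (Fp n)) (EF_mem M₁) (EF_mem M₂)
      (EF_surj M₁) (EF_surj M₂)
      (fun n => coneF f hδ hβ hc (n + 2).toNat n (by omega))
  · exact cone_transport _ _ (pMap f) (DT M₁) (DT M₂) (phiT f) (EP M₁) (EP M₂)
      (EP_inj M₁) (EP_inj M₂) (EP_D M₁) (EP_D M₂) (EP_map f) (phiT_DT f hδ hβ)
      (fun n => Sup M₁ (Pp n)) (fun n => Sup M₂ (Pp n)) (EP_mem M₁) (EP_mem M₂)
      (EP_surj M₁) (EP_surj M₂) (coneP f hδ hβ hc)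

end CDGA
end
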